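/- arXiv:2307.11680 — 6 statements merged into one kernel-verified Lean document; each statement's English description precedes it below -/
import Mathlib

section
/- Let X be a nonempty finite set, d a natural number, and A : Fin (d+1) → Matrix X X ℂ a commutative d-class association scheme on X with Bose–Mesner algebra M (the ℂ-linear span of {A 0, …, A d}). If B ∈ M has exactly d+1 distinct eigenvalues (its spectrum over ℂ has cardinality d+1), then the matrices B^0, B^1, …, B^d are linearly independent over ℂ and M equals the ℂ-linear span of {B^0, B^1, …, B^d}; in particular every element of M is a polynomial in B. -/
open Matrix Polynomial BigOperators

/-- The all-ones matrix `J`. -/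
def allOnes (X : Type*) [Fintype X] : Matrix X X ℂ := Matrix.of fun _ _ => 1

/-- A commutative `d`-class association scheme on a finite set `X`:
a family of 0-1 matrices containing the identity, summing to the all-ones
matrix, closed under transpose, whose pairwise products lie in the linear
span of the family (the Bose–Mesner algebra) and commute. -/
structure IsCommAssocScheme {X : Type*} [Fintype X] [DecidableEq X] (d : ℕ)
    (A : Fin (d + 1) → Matrix X X ℂ) : Prop where
  zero_one : ∀ i x y, A i x y = 0 ∨ A i x y = 1
  a_zero : A 0 = 1
  sum_eq : ∑ i, A i = allOnes X
  transpose_mem : ∀ i, ∃ j, (A i)ᵀ = A j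
  mul_mem : ∀ i j, A i * A j ∈ Submodule.span ℂ (Set.range A)
  comm : ∀ i j, A i * A j = A j * A i

/-!
A nonzero polynomial annihilating `b` vanishes on the spectrum of `b`, so its degree is at least
the number of eigenvalues. If `b` has at least `n` eigenvalues, evaluation at `b` is therefore
injective on polynomials of degree `< n`, that is, `1, b, …, b ^ (n - 1)` are linearly independent.
If `b` moreover lies in an algebra spanned by `n` elements, so do these powers, and counting
dimensions shows that they span it.
-/

theorem linearIndependent_X_pow (R : Type*) [Semiring R] (n : ℕ) :
    LinearIndependent R fun i : Fin n ↦ (X : R[X]) ^ (i : ℕ) := by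
  simpa [Function.comp_def, X_pow_eq_monomial] using
    (basisMonomials R).linearIndependent.comp _ Fin.val_injective

theorem span_range_X_pow (R : Type*) [Semiring R] (n : ℕ) :
    Submodule.span R (Set.range fun i : Fin n ↦ (X : R[X]) ^ (i : ℕ)) = degreeLT R n := by
  classical
  rw [degreeLT_eq_span_X_pow]
  congr 1
  ext p
  simp [Fin.exists_iff]

theorem span_range_pow_eq_map_degreeLT {R A : Type*} [CommSemiring R] [Semiring A] [Algebra R A]
    (a : A) (n : ℕ) :
    Submodule.span R (Set.range fun i : Fin n ↦ a ^ (i : ℕ)) =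
      (degreeLT R n).map (aeval a).toLinearMap := by
  rw [← span_range_X_pow, Submodule.map_span, ← Set.range_comp]
  simp [Function.comp_def]

section Spectrum

variable {K R : Type*} [Field K] [Ring R] [Algebra K R] {b : R}

theorem spectrum_subset_rootSet {p : K[X]} (hp : p ≠ 0) (hpb : aeval b p = 0) :
    spectrum K b ⊆ p.rootSet K := by
  intro μ hμ
  have : Nontrivial R := not_subsingleton_iff_nontrivial.mp fun _ ↦ by simp at hμ
  have heval : p.eval μ ∈ spectrum K (aeval b p) :=
    spectrum.subset_polynomial_aeval b p ⟨μ, hμ, rfl⟩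
  rw [hpb, spectrum.zero_eq, Set.mem_singleton_iff] at heval
  rwa [mem_rootSet_of_ne hp, coe_aeval_eq_eval]

theorem encard_spectrum_le_natDegree {p : K[X]} (hp : p ≠ 0) (hpb : aeval b p = 0) :
    (spectrum K b).encard ≤ p.natDegree :=
  calc (spectrum K b).encard
    _ ≤ (p.rootSet K).encard := Set.encard_le_encard (spectrum_subset_rootSet hp hpb)
    _ = (p.rootSet K).ncard := (p.rootSet_finite K).cast_ncard_eq.symm
    _ ≤ p.natDegree := mod_cast p.ncard_rootSet_le K

theorem linearIndependent_pow_of_le_encard_spectrum {n : ℕ}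
    (hn : n ≤ (spectrum K b).encard) :
    LinearIndependent K fun i : Fin n ↦ b ^ (i : ℕ) := by
  have haeval : Disjoint (degreeLT K n) (aeval (R := K) b).toLinearMap.ker := by
    refine LinearMap.disjoint_ker.mpr fun p hp hpb ↦ ?_
    by_contra hp0
    have hlt : p.natDegree < n := (natDegree_lt_iff_degree_lt hp0).mpr (mem_degreeLT.mp hp)
    have hle : n ≤ p.natDegree := mod_cast hn.trans (encard_spectrum_le_natDegree hp0 hpb)
    exact hlt.not_ge hle
  rw [← span_range_X_pow] at haeval
  simpa [Function.comp_def] using (linearIndependent_X_pow K n).map haeval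

end Spectrum

theorem span_range_eq_of_linearIndependent_of_card_le {K V ι κ : Type*} [DivisionRing K]
    [AddCommGroup V] [Module K V] [Fintype ι] [Fintype κ] {v : ι → V} {w : κ → V}
    (hv : LinearIndependent K v) (hcard : Fintype.card κ ≤ Fintype.card ι)
    (hmem : ∀ i, v i ∈ Submodule.span K (Set.range w)) :
    Submodule.span K (Set.range v) = Submodule.span K (Set.range w) := by
  have : FiniteDimensional K (Submodule.span K (Set.range w)) :=
    FiniteDimensional.span_of_finite K (Set.finite_range w)
  refine Submodule.eq_of_le_of_finrank_le (Submodule.span_le.mpr (Set.range_subset_iff.mpr hmem)) ?_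
  rw [finrank_span_eq_card hv]
  exact (finrank_range_le_card w).trans hcard

theorem pow_mem_span_of_mul_mem {R A : Type*} [CommSemiring R] [Semiring A] [Algebra R A]
    {s : Set A} (hone : 1 ∈ Submodule.span R s)
    (hmul : ∀ x ∈ s, ∀ y ∈ s, x * y ∈ Submodule.span R s)
    {a : A} (ha : a ∈ Submodule.span R s) (k : ℕ) : a ^ k ∈ Submodule.span R s := by
  have hclosed : Submodule.span R s * Submodule.span R s ≤ Submodule.span R s := by
    rw [Submodule.span_mul_span, Submodule.span_le]
    exact Set.mul_subset_iff.mpr hmul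
  exact pow_mem (S := (Submodule.span R s).toSubalgebra hone
    fun _ _ hx hy ↦ hclosed (Submodule.mul_mem_mul hx hy)) ha k

theorem stmt_0_general {K R : Type*} [Field K] [Ring R] [Algebra K R] {n : ℕ} (a : Fin n → R)
    (hone : 1 ∈ Submodule.span K (Set.range a))
    (hmul : ∀ i j, a i * a j ∈ Submodule.span K (Set.range a))
    {b : R} (hb : b ∈ Submodule.span K (Set.range a)) (hspec : n ≤ (spectrum K b).encard) :
    LinearIndependent K (fun i : Fin n ↦ b ^ (i : ℕ)) ∧
    Submodule.span K (Set.range a) = Submodule.span K (Set.range fun i : Fin n ↦ b ^ (i : ℕ)) ∧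
    ∀ c ∈ Submodule.span K (Set.range a), ∃ p : K[X], aeval b p = c := by
  have hindep := linearIndependent_pow_of_le_encard_spectrum hspec
  have hpow (k : ℕ) : b ^ k ∈ Submodule.span K (Set.range a) :=
    pow_mem_span_of_mul_mem hone (Set.forall_mem_range.mpr fun i ↦
      Set.forall_mem_range.mpr (hmul i)) hb k
  have hspan := (span_range_eq_of_linearIndependent_of_card_le hindep le_rfl fun i ↦ hpow i).symm
  refine ⟨hindep, hspan, fun c hc ↦ ?_⟩
  rw [hspan, span_range_pow_eq_map_degreeLT] at hc
  obtain ⟨p, -, hp⟩ := hc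
  exact ⟨p, hp⟩

/-- If `B` in the Bose–Mesner algebra `M` has exactly `d+1` distinct eigenvalues,
then `B^0, …, B^d` are linearly independent and `M` equals their span; in
particular every element of `M` is a polynomial in `B`. -/
theorem stmt_0 {X : Type*} [Fintype X] [DecidableEq X] [Nonempty X] {d : ℕ}
    (A : Fin (d + 1) → Matrix X X ℂ) (hA : IsCommAssocScheme d A)
    (B : Matrix X X ℂ) (hB : B ∈ Submodule.span ℂ (Set.range A))
    (hspec : (spectrum ℂ B).ncard = d + 1) :
    LinearIndependent ℂ (fun i : Fin (d + 1) => B ^ (i : ℕ)) ∧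
    Submodule.span ℂ (Set.range A)
      = Submodule.span ℂ (Set.range fun i : Fin (d + 1) => B ^ (i : ℕ)) ∧
    ∀ C ∈ Submodule.span ℂ (Set.range A), ∃ p : Polynomial ℂ, aeval B p = C :=
  stmt_0_general A (Submodule.subset_span ⟨0, hA.a_zero⟩) hA.mul_mem hB
    (by simpa [hspec] using (spectrum ℂ B).ncard_le_encard)
end

section
/- Let X be a nonempty finite set and A : Fin (d+1) → Matrix X X ℂ a commutative d-class association scheme on X with Bose–Mesner algebra M. If B ∈ M is a matrix all of whose entries are 0 or 1 and B has exactly d+1 distinct eigenvalues, then for all vertices x, y ∈ X there exists ℓ with 0 ≤ ℓ ≤ d such that (B^ℓ) x y ≠ 0; in particular the digraph Γ(B) (with an arc from x to y iff B x y = 1) is strongly connected. -/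
open Matrix Polynomial BigOperators

/-!
The minimal polynomial of `B` has at least as many roots as `B` has eigenvalues, so
`1, B, …, B ^ d` are linearly independent. They lie in the Bose–Mesner algebra, whose dimension is
at most `d + 1`, hence they span it and `J` is a combination of them. Every entry of `J` is nonzero,
so at each position some `B ^ ℓ` with `ℓ ≤ d` is nonzero too.
-/

section Minpoly

variable {K R : Type*} [Field K] [Ring R] [Algebra K R] {a : R}

theorem spectrum_subset_rootSet_minpoly (ha : IsIntegral K a) :
    spectrum K a ⊆ (minpoly K a).rootSet K := by
  intro μ hμ
  rcases subsingleton_or_nontrivial R with _ | _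
  · simp [spectrum.of_subsingleton] at hμ
  have hroot : (minpoly K a).eval μ ∈ spectrum K (aeval a (minpoly K a)) :=
    spectrum.subset_polynomial_aeval a _ ⟨μ, hμ, rfl⟩
  rw [minpoly.aeval, spectrum.zero_eq, Set.mem_singleton_iff] at hroot
  rwa [mem_rootSet_of_ne (minpoly.ne_zero ha), coe_aeval_eq_eval]

theorem ncard_spectrum_le_natDegree_minpoly (ha : IsIntegral K a) :
    (spectrum K a).ncard ≤ (minpoly K a).natDegree :=
  (Set.ncard_le_ncard (spectrum_subset_rootSet_minpoly ha) (rootSet_finite _ K)).trans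
    (ncard_rootSet_le _ K)

variable {S : Subalgebra K R} [FiniteDimensional K S]

theorem span_pow_eq_toSubmodule_of_finrank_le_natDegree_minpoly (ha : a ∈ S)
    (hdeg : Module.finrank K S ≤ (minpoly K a).natDegree) :
    Submodule.span K (Set.range fun i : Fin (Module.finrank K S) => a ^ (i : ℕ)) =
      Subalgebra.toSubmodule S := by
  have hindep : LinearIndependent K fun i : Fin (Module.finrank K S) => a ^ (i : ℕ) :=
    (linearIndependent_pow a).comp (Fin.castLE hdeg) (Fin.castLE_injective hdeg)
  have : FiniteDimensional K (Subalgebra.toSubmodule S) := ‹FiniteDimensional K S›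
  refine Submodule.eq_of_le_of_finrank_eq (Submodule.span_le.2 ?_) ?_
  · rintro _ ⟨i, rfl⟩
    exact pow_mem ha i
  · rw [finrank_span_eq_card hindep, Fintype.card_fin, Subalgebra.finrank_toSubmodule]

theorem exists_pow_map_ne_zero_of_finrank_le_natDegree_minpoly {N : Type*} [AddCommGroup N]
    [Module K N] (ha : a ∈ S) (hdeg : Module.finrank K S ≤ (minpoly K a).natDegree)
    (f : R →ₗ[K] N) {c : R} (hc : c ∈ S) (hfc : f c ≠ 0) :
    ∃ ℓ < Module.finrank K S, f (a ^ ℓ) ≠ 0 := by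
  by_contra! hzero
  have hker : Subalgebra.toSubmodule S ≤ LinearMap.ker f := by
    rw [← span_pow_eq_toSubmodule_of_finrank_le_natDegree_minpoly ha hdeg, Submodule.span_le]
    rintro _ ⟨i, rfl⟩
    exact hzero i i.isLt
  exact hfc (hker hc)

end Minpoly

namespace IsCommAssocScheme

variable {X : Type*} [Fintype X] [DecidableEq X] {d : ℕ} {A : Fin (d + 1) → Matrix X X ℂ}

theorem mul_mem_span (hA : IsCommAssocScheme d A) {P Q : Matrix X X ℂ}
    (hP : P ∈ Submodule.span ℂ (Set.range A)) (hQ : Q ∈ Submodule.span ℂ (Set.range A)) :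
    P * Q ∈ Submodule.span ℂ (Set.range A) := by
  have hPQ := Submodule.mul_mem_mul hP hQ
  rw [Submodule.span_mul_span] at hPQ
  refine Submodule.span_le.2 ?_ hPQ
  rintro _ ⟨_, ⟨i, rfl⟩, _, ⟨j, rfl⟩, rfl⟩
  exact hA.mul_mem i j

/-- The Bose–Mesner algebra of an association scheme: the linear span of its matrices, as a
subalgebra of the full matrix algebra. -/
def boseMesner (hA : IsCommAssocScheme d A) : Subalgebra ℂ (Matrix X X ℂ) :=
  (Submodule.span ℂ (Set.range A)).toSubalgebra
    (hA.a_zero ▸ Submodule.subset_span (Set.mem_range_self 0)) fun _ _ => hA.mul_mem_span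

theorem finrank_boseMesner_le (hA : IsCommAssocScheme d A) :
    Module.finrank ℂ hA.boseMesner ≤ d + 1 :=
  (finrank_range_le_card A).trans_eq (Fintype.card_fin _)

theorem allOnes_mem_boseMesner (hA : IsCommAssocScheme d A) : allOnes X ∈ hA.boseMesner :=
  hA.sum_eq ▸ sum_mem fun i _ => Submodule.subset_span (Set.mem_range_self i)

end IsCommAssocScheme

theorem stmt_1_general {K X : Type*} [Field K] [Fintype X] [DecidableEq X]
    (S : Subalgebra K (Matrix X X K)) {B : Matrix X X K} (hB : B ∈ S)
    (hdeg : Module.finrank K S ≤ (minpoly K B).natDegree)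
    {C : Matrix X X K} (hC : C ∈ S) {x y : X} (hxy : C x y ≠ 0) :
    ∃ ℓ < Module.finrank K S, (B ^ ℓ) x y ≠ 0 :=
  exists_pow_map_ne_zero_of_finrank_le_natDegree_minpoly hB hdeg
    (Matrix.entryLinearMap K K x y) hC hxy

/-- If a 0-1 matrix `B` in the Bose–Mesner algebra has exactly `d+1` distinct
eigenvalues, then for all `x y` there is `ℓ ≤ d` with `(B^ℓ) x y ≠ 0`;
in particular the digraph `Γ(B)` is strongly connected. -/
theorem stmt_1 {X : Type*} [Fintype X] [DecidableEq X] [Nonempty X] {d : ℕ}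
    (A : Fin (d + 1) → Matrix X X ℂ) (hA : IsCommAssocScheme d A)
    (B : Matrix X X ℂ) (hB : B ∈ Submodule.span ℂ (Set.range A))
    (h01 : ∀ x y, B x y = 0 ∨ B x y = 1)
    (hspec : (spectrum ℂ B).ncard = d + 1) :
    ∀ x y : X, ∃ ℓ : ℕ, ℓ ≤ d ∧ (B ^ ℓ) x y ≠ 0 := by
  intro x y
  have hdeg : d + 1 ≤ (minpoly ℂ B).natDegree :=
    hspec ▸ ncard_spectrum_le_natDegree_minpoly (Algebra.IsIntegral.isIntegral B)
  obtain ⟨ℓ, hℓ, hne⟩ := stmt_1_general hA.boseMesner hB (hA.finrank_boseMesner_le.trans hdeg)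
    hA.allOnes_mem_boseMesner (show allOnes X x y ≠ 0 from one_ne_zero)
  exact ⟨ℓ, Nat.lt_succ_iff.1 (hℓ.trans_le hA.finrank_boseMesner_le), hne⟩
end

section
/- Let X be a nonempty finite set and A : Fin (d+1) → Matrix X X ℂ a commutative d-class association scheme on X with Bose–Mesner algebra M. Let B ∈ M be a matrix all of whose entries are 0 or 1. Then there exists a polynomial H ∈ ℂ[t] with J = H(B) (J the all-ones matrix) if and only if the digraph Γ(B) is strongly connected, i.e., for all x, y ∈ X there exists ℓ ≥ 0 with (B^ℓ) x y ≠ 0. -/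
open Matrix Polynomial BigOperators

/-!
This is Hoffman's polynomial argument. If `J = H(B)`, then at every position some power of `B` must
be nonzero. Conversely, commuting with `J` means that all row and
column sums of `B` equal one number `k`, so `k` is an eigenvalue and the minimal polynomial factors
as `(t - k) q`. Every column of `q(B) ≠ 0` is a `k`-eigenvector of `B`, hence harmonic, hence
constant by the maximum principle on a strongly connected digraph. As `q(B)` also commutes with
`J`, it is a nonzero multiple of `J`.
-/

section StronglyConnected

variable {n R : Type*} [Fintype n]

theorem commute_of_one_iff [NonAssocSemiring R] {M : Matrix n n R} :
    Commute M (of 1) ↔ ∀ x y, ∑ z, M x z = ∑ z, M z y := by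
  simp [commute_iff_eq, ← Matrix.ext_iff, mul_apply]

theorem apply_eq_apply_of_commute_of_one [NonAssocSemiring R] [IsAddTorsionFree R]
    {M : Matrix n n R} (hM : Commute M (of 1)) (hcol : ∀ x x' y, M x y = M x' y) (x y x' y' : n) :
    M x y = M x' y' := by
  have : Nonempty n := ⟨x⟩
  have card_nsmul (x y : n) : Fintype.card n • M x y = ∑ z, M z y := by
    simp [hcol _ x y]
  refine nsmul_right_injective (Fintype.card_ne_zero (α := n)) ?_
  simp only [card_nsmul]
  rw [← commute_of_one_iff.1 hM x y, commute_of_one_iff.1 hM x y']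

variable [DecidableEq n]

/-- Strong connectedness of the digraph with an arc from `x` to `y` whenever `B x y ≠ 0`, expressed
through the powers of `B`. For entries without cancellation, such as nonnegative ones, this is the
usual notion; in general it requires a walk whose length is not lost to cancellation in `B ^ ℓ`. -/
def IsStronglyConnected [Semiring R] (B : Matrix n n R) : Prop :=
  ∀ x y, ∃ ℓ : ℕ, (B ^ ℓ) x y ≠ 0

theorem IsStronglyConnected.reflTransGen [Semiring R] {B : Matrix n n R}
    (hB : IsStronglyConnected B) (x y : n) :
    Relation.ReflTransGen (fun x y ↦ B x y ≠ 0) x y := by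
  obtain ⟨ℓ, hℓ⟩ := hB x y
  induction ℓ generalizing y with
  | zero =>
    obtain rfl : x = y := by
      by_contra hxy
      simp [hxy] at hℓ
    exact .refl
  | succ ℓ ih =>
    rw [pow_succ, mul_apply] at hℓ
    obtain ⟨z, -, hz⟩ := Finset.exists_ne_zero_of_sum_ne_zero hℓ
    exact (ih z (left_ne_zero_of_mul hz)).tail (right_ne_zero_of_mul hz)

theorem isStronglyConnected_of_aeval_eq_of_one [CommSemiring R] [Nontrivial R]
    {B : Matrix n n R} {H : R[X]} (hH : aeval B H = of 1) : IsStronglyConnected B := by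
  intro x y
  by_contra! hpow
  have hentry : aeval B H x y = 1 := by simp [hH]
  simp [aeval_eq_sum_range, Matrix.sum_apply, hpow] at hentry

end StronglyConnected

theorem commute_aeval_right {R A : Type*} [CommSemiring R] [Semiring A] [Algebra R A] {a b : A}
    (h : Commute a b) (p : R[X]) : Commute a (aeval b p) :=
  Algebra.commute_of_mem_adjoin_singleton_of_commute (aeval_mem_adjoin_singleton R b) h

theorem exists_aeval_ne_zero_of_isRoot_minpoly {K A : Type*} [Field K] [Ring A] [Algebra K A]
    {a : A} {k : K} (ha : IsIntegral K a) (hk : (minpoly K a).IsRoot k) :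
    ∃ q : K[X], aeval a q ≠ 0 ∧ a * aeval a q = k • aeval a q := by
  obtain ⟨q, hq⟩ := dvd_iff_isRoot.2 hk
  have hmonic : q.Monic := (monic_X_sub_C k).of_mul_monic_left (hq ▸ minpoly.monic ha)
  refine ⟨q, minpoly.aeval_ne_zero_of_dvdNotUnit_minpoly ha hmonic
    ⟨hmonic.ne_zero, X - C k, not_isUnit_X_sub_C k, by rw [hq, mul_comm]⟩, ?_⟩
  have hzero : (a - algebraMap K A k) * aeval a q = 0 := by
    simpa [hq] using minpoly.aeval K a
  rwa [sub_mul, sub_eq_zero, ← Algebra.smul_def] at hzero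

theorem isRoot_minpoly_of_mulVec_eq_smul {n K : Type*} [Fintype n] [DecidableEq n] [Field K]
    {B : Matrix n n K} {k : K} {v : n → K} (hv : v ≠ 0) (h : B *ᵥ v = k • v) :
    (minpoly K B).IsRoot k := by
  have heigen : Module.End.HasEigenvector (toLin' B) k v :=
    Module.End.hasEigenvector_iff.2 ⟨Module.End.mem_eigenspace_iff.2 h, hv⟩
  exact minpoly_toLin' B ▸
    Module.End.isRoot_of_hasEigenvalue (Module.End.hasEigenvalue_of_hasEigenvector heigen)

theorem exists_aeval_eq_of_one {n K : Type*} [Fintype n] [DecidableEq n] [Nonempty n] [Field K]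
    [CharZero K] {B : Matrix n n K} {k : K} (hB : Commute B (of 1)) (hk : B *ᵥ 1 = k • 1)
    (hconst : ∀ v : n → K, B *ᵥ v = k • v → ∀ x y, v x = v y) :
    ∃ H : K[X], aeval B H = of 1 := by
  obtain ⟨q, hq, hBq⟩ := exists_aeval_ne_zero_of_isRoot_minpoly
    (Algebra.IsIntegral.isIntegral B) (isRoot_minpoly_of_mulVec_eq_smul one_ne_zero hk)
  have hcol (x x' y : n) : aeval B q x y = aeval B q x' y := by
    refine hconst (fun z ↦ aeval B q z y) ?_ x x'
    ext z
    exact congr($hBq z y)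
  have hentry := apply_eq_apply_of_commute_of_one (commute_aeval_right hB.symm q).symm hcol
  obtain ⟨x₀, y₀, hne⟩ : ∃ x₀ y₀, aeval B q x₀ y₀ ≠ 0 := by
    by_contra! hzero
    exact hq (Matrix.ext hzero)
  refine ⟨(aeval B q x₀ y₀)⁻¹ • q, ?_⟩
  ext x y
  simp [hentry x y x₀ y₀, hne]

/-- The maximum principle: at a maximum, a harmonic function is a weighted mean of its values at the
out-neighbours, so the maximum propagates along arcs. -/
theorem apply_eq_of_sum_mul_sub_eq_zero {n K : Type*} [Fintype n] [Ring K] [LinearOrder K]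
    [IsStrictOrderedRing K] {b : n → n → K} (hb : ∀ x y, 0 ≤ b x y)
    (hconn : ∀ x y, Relation.ReflTransGen (fun x y ↦ b x y ≠ 0) x y) {u : n → K}
    (hu : ∀ x, ∑ y, b x y * (u x - u y) = 0) (x y : n) : u x = u y := by
  have : Nonempty n := ⟨x⟩
  obtain ⟨m, hm⟩ := Finite.exists_max u
  have propagate {z w : n} (hz : u z = u m) (hzw : b z w ≠ 0) : u w = u m := by
    have hnonneg : ∀ w ∈ Finset.univ, 0 ≤ b z w * (u z - u w) := fun w _ ↦
      mul_nonneg (hb z w) (sub_nonneg.2 (hz ▸ hm w))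
    have hterm := (Finset.sum_eq_zero_iff_of_nonneg hnonneg).1 (hu z) w (Finset.mem_univ w)
    rw [← hz, sub_eq_zero.1 ((mul_eq_zero.1 hterm).resolve_left hzw)]
  have eq_max (z : n) : u z = u m := by
    induction hconn m z with
    | refl => rfl
    | tail _ hzw ih => exact propagate ih hzw
  rw [eq_max x, eq_max y]

section Nonnegative

open scoped ComplexOrder

variable {n 𝕜 : Type*} [Fintype n] [DecidableEq n] [RCLike 𝕜] {B : Matrix n n 𝕜}

theorem IsStronglyConnected.apply_eq_of_mulVec_eq_smul (hconn : IsStronglyConnected B)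
    (hB : ∀ x y, 0 ≤ B x y) {k : 𝕜} (hk : B *ᵥ 1 = k • 1) {v : n → 𝕜} (hv : B *ᵥ v = k • v)
    (x y : n) : v x = v y := by
  have hre (x y : n) : 0 ≤ RCLike.re (B x y) := (RCLike.nonneg_iff.1 (hB x y)).1
  have him (x y : n) : RCLike.im (B x y) = 0 := (RCLike.nonneg_iff.1 (hB x y)).2
  have hne (x y : n) : RCLike.re (B x y) ≠ 0 ↔ B x y ≠ 0 := by
    simp [RCLike.ext_iff (K := 𝕜), him]
  have hreach (x y : n) : Relation.ReflTransGen (fun x y ↦ RCLike.re (B x y) ≠ 0) x y := by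
    simpa only [hne] using hconn.reflTransGen x y
  have hharm (x : n) : ∑ y, B x y * (v x - v y) = 0 := by
    have hrow : ∑ y, B x y = k := by simpa [mulVec, dotProduct] using congr($hk x)
    have hmean : ∑ y, B x y * v y = k * v x := congr($hv x)
    simp only [mul_sub, Finset.sum_sub_distrib, ← Finset.sum_mul, hrow, hmean, sub_self]
  refine RCLike.ext ?_ ?_
  · refine apply_eq_of_sum_mul_sub_eq_zero (u := fun x ↦ RCLike.re (v x)) hre hreach
      (fun x ↦ ?_) x y
    simpa [him] using congr(RCLike.re $(hharm x))
  · refine apply_eq_of_sum_mul_sub_eq_zero (u := fun x ↦ RCLike.im (v x)) hre hreach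
      (fun x ↦ ?_) x y
    simpa [him] using congr(RCLike.im $(hharm x))

theorem stmt_3_general (hB : ∀ x y, 0 ≤ B x y) :
    (∃ H : 𝕜[X], aeval B H = of 1) ↔ Commute B (of 1) ∧ IsStronglyConnected B := by
  constructor
  · rintro ⟨H, hH⟩
    exact ⟨hH ▸ commute_aeval_right (.refl B) H, isStronglyConnected_of_aeval_eq_of_one hH⟩
  · rintro ⟨hcomm, hconn⟩
    cases isEmpty_or_nonempty n with
    | inl _ => exact ⟨0, Subsingleton.elim _ _⟩
    | inr _ =>
      let x₀ : n := Classical.arbitrary n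
      have hk : B *ᵥ 1 = (∑ z, B z x₀) • 1 := by
        ext x
        simpa [mulVec, dotProduct] using commute_of_one_iff.1 hcomm x x₀
      exact exists_aeval_eq_of_one hcomm hk fun v hv ↦
        hconn.apply_eq_of_mulVec_eq_smul hB hk hv

end Nonnegative

theorem IsCommAssocScheme.commute_allOnes {X : Type*} [Fintype X] [DecidableEq X] {d : ℕ}
    {A : Fin (d + 1) → Matrix X X ℂ} (hA : IsCommAssocScheme d A) {M : Matrix X X ℂ}
    (hM : M ∈ Submodule.span ℂ (Set.range A)) : Commute M (allOnes X) := by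
  have hgen : Set.range A ⊆ Subalgebra.centralizer ℂ {allOnes X} := by
    rintro _ ⟨i, rfl⟩
    simp only [SetLike.mem_coe, Subalgebra.mem_centralizer_iff, Set.mem_singleton_iff, forall_eq]
    rw [← hA.sum_eq]
    exact Commute.sum_left _ _ _ fun j _ ↦ hA.comm j i
  have hmem : M ∈ Subalgebra.centralizer ℂ {allOnes X} :=
    Submodule.span_le (p := (Subalgebra.centralizer ℂ {allOnes X}).toSubmodule).2 hgen hM
  exact ((Subalgebra.mem_centralizer_iff ℂ).1 hmem _ rfl).symm

/-- For a 0-1 matrix `B` in the Bose–Mesner algebra, the all-ones matrix `J`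
is a polynomial in `B` iff the digraph `Γ(B)` is strongly connected. -/
theorem stmt_3 {X : Type*} [Fintype X] [DecidableEq X] [Nonempty X] {d : ℕ}
    (A : Fin (d + 1) → Matrix X X ℂ) (hA : IsCommAssocScheme d A)
    (B : Matrix X X ℂ) (hB : B ∈ Submodule.span ℂ (Set.range A))
    (h01 : ∀ x y, B x y = 0 ∨ B x y = 1) :
    (∃ H : Polynomial ℂ, aeval B H = allOnes X) ↔
      (∀ x y : X, ∃ ℓ : ℕ, (B ^ ℓ) x y ≠ 0) := by
  refine (stmt_3_general fun x y ↦ ?_).trans (and_iff_right (hA.commute_allOnes hB))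
  open scoped ComplexOrder in rcases h01 x y with h | h <;> simp [h]
end

section
/- Let k, r, s, w be real numbers with k > 0 and let N be an integer with N > 1. Assume either (a) (conference case) w = 2k + 1, r = (-1 + √w)/2 and s = (-1 - √w)/2; or (b) r and s are integers with r ≥ 1, s ≤ -2, k > r, k + r·s > 0, w = (k - r)(k - s)/(k + r·s), and w > k. Then the four real numbers k + (N - 1)·w, k - w, r, s are pairwise distinct, and the four real numbers -1 - k + N·w, -1 - k, -1 - r, -1 - s are pairwise distinct. -/
/-!
Everything follows from the three inequalities `s < r < k` and `k - s < w`, which hold in both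
cases. They place `r` and `s` strictly between `k - w` and `k ≤ k + (N - 1) * w`, and `-1 - r` and
`-1 - s` strictly between `-1 - k` and `-1 - k + w ≤ -1 - k + N * w`. For a conference graph the
inequalities come down to `√w < w`, and for `w = (k - r) * (k - s) / (k + r * s)` to `r < -(r * s)`.
-/

theorem list_nodup_of_between {α : Type*} [Preorder α] {a b c d : α}
    (hbc : b < c) (hca : c < a) (hbd : b < d) (hda : d < a) (hcd : c ≠ d) :
    [a, b, c, d].Nodup := by
  simp [(hbc.trans hca).ne', hca.ne', hda.ne', hbc.ne, hbd.ne, hcd]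

section UnionEigenvalues

variable {R : Type*} [CommRing R] [LinearOrder R] [IsStrictOrderedRing R] {k r s w N : R}

theorem nodup_eigenvalues_union_one_three (hsr : s < r) (hrk : r < k) (hw : k - s < w)
    (hN : 1 ≤ N) : [k + (N - 1) * w, k - w, r, s].Nodup := by
  have hle : 0 ≤ (N - 1) * w := mul_nonneg (by linarith) (by linarith)
  refine list_nodup_of_between ?_ ?_ ?_ ?_ hsr.ne' <;> linarith

theorem nodup_eigenvalues_union_two_three (hsr : s < r) (hrk : r < k) (hw : k - s < w)
    (hN : 1 ≤ N) : [-1 - k + N * w, -1 - k, -1 - r, -1 - s].Nodup := by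
  have hle : w ≤ N * w := le_mul_of_one_le_left (by linarith) hN
  have hne : -1 - r ≠ -1 - s := sub_right_injective.ne hsr.ne'
  refine list_nodup_of_between ?_ ?_ ?_ ?_ hne <;> linarith

theorem lt_neg_mul_of_lt_neg_one (hr : 0 < r) (hs : s < -1) : r < -(r * s) := by
  simpa only [mul_neg] using lt_mul_of_one_lt_right hr (lt_neg_of_lt_neg hs)

theorem lt_valency_of_pos_add_mul (hr : 0 < r) (hs : s < -1) (hμ : 0 < k + r * s) : r < k := by
  have hrs : r < -(r * s) := lt_neg_mul_of_lt_neg_one hr hs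
  linarith

end UnionEigenvalues

theorem valency_sub_lt_order {F : Type*} [Field F] [LinearOrder F] [IsStrictOrderedRing F]
    {k r s : F} (hr : 0 < r) (hs : s < -1) (hμ : 0 < k + r * s) :
    k - s < (k - r) * (k - s) / (k + r * s) := by
  have hrs : r < -(r * s) := lt_neg_mul_of_lt_neg_one hr hs
  have hks : 0 < k - s := by linarith
  rw [lt_div_iff₀ hμ, mul_comm]
  exact mul_lt_mul_of_pos_right (by linarith) hks

section ConferenceGraph

variable {k : ℝ}

theorem conference_eigenvalue_lt_valency (hk : 0 < k) :
    (-1 + √(2 * k + 1)) / 2 < k := by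
  have hsqrt : √(2 * k + 1) < 2 * k + 1 := Real.sqrt_lt_self_iff.2 (by linarith)
  linarith

theorem conference_valency_sub_lt_order (hk : 0 < k) :
    k - (-1 - √(2 * k + 1)) / 2 < 2 * k + 1 := by
  have hsqrt : √(2 * k + 1) < 2 * k + 1 := Real.sqrt_lt_self_iff.2 (by linarith)
  linarith

theorem conference_eigenvalues_lt (hk : 0 < k) :
    (-1 - √(2 * k + 1)) / 2 < (-1 + √(2 * k + 1)) / 2 := by
  have hsqrt : 0 < √(2 * k + 1) := Real.sqrt_pos.2 (by linarith)
  linarith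

end ConferenceGraph

theorem stmt_12_general (k r s w N : ℝ) (hk : 0 < k) (hN : 1 ≤ N)
    (hcase :
      (w = 2 * k + 1 ∧ r = (-1 + √w) / 2 ∧ s = (-1 - √w) / 2) ∨
      (0 < r ∧ s < -1 ∧ 0 < k + r * s ∧ w = (k - r) * (k - s) / (k + r * s))) :
    [k + (N - 1) * w, k - w, r, s].Pairwise (· ≠ ·) ∧
    [-1 - k + N * w, -1 - k, -1 - r, -1 - s].Pairwise (· ≠ ·) := by
  obtain ⟨hsr, hrk, hw⟩ : s < r ∧ r < k ∧ k - s < w := by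
    rcases hcase with ⟨rfl, rfl, rfl⟩ | ⟨hr, hs, hμ, rfl⟩
    · exact ⟨conference_eigenvalues_lt hk, conference_eigenvalue_lt_valency hk,
        conference_valency_sub_lt_order hk⟩
    · exact ⟨by linarith, lt_valency_of_pos_add_mul hr hs hμ, valency_sub_lt_order hr hs hμ⟩
  exact ⟨nodup_eigenvalues_union_one_three hsr hrk hw hN,
    nodup_eigenvalues_union_two_three hsr hrk hw hN⟩

/-- Distinctness of the eigenvalue lists of the union graphs `G_{1,3}` and
`G_{2,3}` arising from a symmetric 3-class scheme whose first relation is a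
disjoint union of `N > 1` connected non-complete strongly regular graphs,
in both the conference case (a) and the integer-eigenvalue case (b). -/
theorem stmt_12 (k r s w : ℝ) (N : ℤ) (hk : 0 < k) (hN : 1 < N)
    (hcase :
      (w = 2 * k + 1 ∧ r = (-1 + Real.sqrt w) / 2 ∧ s = (-1 - Real.sqrt w) / 2) ∨
      ((∃ ri : ℤ, r = ri) ∧ (∃ si : ℤ, s = si) ∧ 1 ≤ r ∧ s ≤ -2 ∧ r < k ∧
        0 < k + r * s ∧ w = (k - r) * (k - s) / (k + r * s) ∧ k < w)) :
    List.Pairwise (· ≠ ·) [k + ((N : ℝ) - 1) * w, k - w, r, s] ∧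
    List.Pairwise (· ≠ ·) [-1 - k + (N : ℝ) * w, -1 - k, -1 - r, -1 - s] := by
  refine stmt_12_general k r s w N hk (mod_cast hN.le) (hcase.imp_right ?_)
  exact fun ⟨_, _, hr, hs, _, hμ, hw, _⟩ ↦ ⟨one_pos.trans_le hr, hs.trans_lt (by norm_num), hμ, hw⟩
end

section
/- Let X be a nonempty finite set, A : Fin (d+1) → Matrix X X ℂ a commutative d-class association scheme on X with Bose–Mesner algebra M, and B ∈ M a matrix all of whose entries are 0 or 1 such that the digraph Γ(B) is strongly connected (for all x, y there exists ℓ ≥ 0 with (B^ℓ) x y ≠ 0). Define ∂(x,y) to be the least ℓ ≥ 0 with (B^ℓ) x y ≠ 0. Then for every i ∈ Fin (d+1) and all vertices x, z, w ∈ X with (A i) x z = 1 and (A i) x w = 1, one has ∂(x,z) = ∂(x,w); that is, all vertices of the cell P_i(x) = { z : (A i) x z = 1 } are at the same distance from x in Γ(B). -/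
open Matrix Polynomial BigOperators

/-- The distance `∂(x,y)` in the digraph `Γ(B)`: the least `ℓ ≥ 0` with
`(B^ℓ) x y ≠ 0`. -/
noncomputable def bdist {X : Type*} [Fintype X] [DecidableEq X]
    (B : Matrix X X ℂ) (x y : X) : ℕ :=
  sInf {ℓ : ℕ | (B ^ ℓ) x y ≠ 0}

/-!
Every matrix in the span of a family `A` of 0-1 matrices summing to the all-ones matrix is constant
on the cells `{z | A i x z = 1}`, because exactly one member of `A` is nonzero at a given position.
The span contains `1` and is closed under products, so it contains every power of `B`: the number of
walks of length `ℓ` from `x`, hence also the distance from `x`, is constant on each cell.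
-/

theorem eq_single_of_zero_or_one_of_sum_eq_one {ι R : Type*} [Fintype ι] [DecidableEq ι]
    [NonAssocSemiring R] [CharZero R] {f : ι → R} (hf : ∀ j, f j = 0 ∨ f j = 1)
    (hsum : ∑ j, f j = 1) {i : ι} (hi : f i = 1) : f = Pi.single i 1 := by
  classical
  have hindicator : f = fun j => if f j = 1 then 1 else 0 := by
    funext j
    rcases hf j with h | h <;> simp [h]
  have hcard : (Finset.univ.filter (f · = 1)).card = 1 := by
    rw [hindicator, Finset.sum_boole] at hsum
    exact_mod_cast hsum
  obtain ⟨k, hk⟩ := Finset.card_eq_one.mp hcard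
  have hk_iff : ∀ j, f j = 1 ↔ j = k := fun j => by simpa using Finset.ext_iff.mp hk j
  obtain rfl := (hk_iff i).mp hi
  rw [hindicator]
  funext j
  simp only [hk_iff, Pi.single_apply]

theorem pow_mem_span_of_mul_mem_span {R E : Type*} [CommSemiring R] [Semiring E] [Algebra R E]
    {s : Set E} (hone : 1 ∈ Submodule.span R s)
    (hmul : ∀ a ∈ s, ∀ b ∈ s, a * b ∈ Submodule.span R s) {b : E} (hb : b ∈ Submodule.span R s)
    (n : ℕ) : b ^ n ∈ Submodule.span R s := by
  have hmul_span : Submodule.span R s * Submodule.span R s ≤ Submodule.span R s := by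
    rw [Submodule.span_mul_span, Submodule.span_le]
    exact Set.mul_subset_iff.mpr hmul
  exact pow_mem (S := (Submodule.span R s).toSubalgebra hone fun _ _ ha hb =>
    hmul_span (Submodule.mul_mem_mul ha hb)) hb n

theorem apply_eq_apply_of_mem_span_range {R ι m n : Type*} [CommSemiring R] [CharZero R]
    [Fintype ι] {A : ι → Matrix m n R} (hA : ∀ i x y, A i x y = 0 ∨ A i x y = 1)
    (hsum : ∑ i, A i = Matrix.of fun _ _ => 1) {M : Matrix m n R}
    (hM : M ∈ Submodule.span R (Set.range A)) {i : ι} {x : m} {z w : n} (hz : A i x z = 1)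
    (hw : A i x w = 1) : M x z = M x w := by
  classical
  have hsingle : ∀ y, A i x y = 1 → (fun j => A j x y) = Pi.single i 1 := fun y =>
    eq_single_of_zero_or_one_of_sum_eq_one (hA · x y)
      (by simpa [Matrix.sum_apply] using congrFun₂ hsum x y)
  have hgen : Set.EqOn (Matrix.entryLinearMap R R x z) (Matrix.entryLinearMap R R x w)
      (Set.range A) :=
    Set.forall_mem_range.mpr (congrFun ((hsingle z hz).trans (hsingle w hw).symm))
  exact LinearMap.eqOn_span hgen hM

theorem stmt_13_general {R ι X : Type*} [CommSemiring R] [CharZero R] [Fintype ι] [Fintype X]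
    [DecidableEq X] {A : ι → Matrix X X R} (hA : ∀ i x y, A i x y = 0 ∨ A i x y = 1)
    (hsum : ∑ i, A i = Matrix.of fun _ _ => 1) (hone : 1 ∈ Submodule.span R (Set.range A))
    (hmul : ∀ i j, A i * A j ∈ Submodule.span R (Set.range A)) {B : Matrix X X R}
    (hB : B ∈ Submodule.span R (Set.range A)) {i : ι} {x z w : X} (hz : A i x z = 1)
    (hw : A i x w = 1) (ℓ : ℕ) : (B ^ ℓ) x z = (B ^ ℓ) x w := by
  have hpow : B ^ ℓ ∈ Submodule.span R (Set.range A) :=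
    pow_mem_span_of_mul_mem_span hone
      (Set.forall_mem_range.mpr fun j => Set.forall_mem_range.mpr (hmul j)) hB ℓ
  exact apply_eq_apply_of_mem_span_range hA hsum hpow hz hw

theorem IsCommAssocScheme.one_mem_span {X : Type*} [Fintype X] [DecidableEq X] {d : ℕ}
    {A : Fin (d + 1) → Matrix X X ℂ} (hA : IsCommAssocScheme d A) :
    1 ∈ Submodule.span ℂ (Set.range A) :=
  Submodule.subset_span ⟨0, hA.a_zero⟩

/-- For a 0-1 matrix `B` in the Bose–Mesner algebra whose digraph is strongly
connected, all vertices of the cell `P_i(x) = {z : (A i) x z = 1}` are at the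
same distance from `x` in `Γ(B)`. -/
theorem stmt_13 {X : Type*} [Fintype X] [DecidableEq X] [Nonempty X] {d : ℕ}
    (A : Fin (d + 1) → Matrix X X ℂ) (hA : IsCommAssocScheme d A)
    (B : Matrix X X ℂ) (hB : B ∈ Submodule.span ℂ (Set.range A))
    (h01 : ∀ x y, B x y = 0 ∨ B x y = 1)
    (hconn : ∀ x y : X, ∃ ℓ : ℕ, (B ^ ℓ) x y ≠ 0) :
    ∀ (i : Fin (d + 1)) (x z w : X), A i x z = 1 → A i x w = 1 →
      bdist B x z = bdist B x w := by
  intro i x z w hz hw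
  simp only [bdist, stmt_13_general hA.zero_one hA.sum_eq hA.one_mem_span hA.mul_mem hB hz hw]
end

section
/- Let X be a nonempty finite set, A : Fin (d+1) → Matrix X X ℂ a commutative d-class association scheme on X with Bose–Mesner algebra M, and B ∈ M a matrix all of whose entries are 0 or 1 that generates M. Define ∂(x,y) to be the least ℓ ≥ 0 with (B^ℓ) x y ≠ 0 (which exists for all pairs). Then: (i) for every i ∈ Fin (d+1) and all x, y, u, v ∈ X, if (A i) x y = 1 and (A i) u v = 1 then ∂(x,y) = ∂(u,v); and (ii) for every h ≥ 0, the distance-h matrix A_h of Γ(B), defined by (A_h) x y = 1 if ∂(x,y) = h and 0 otherwise, belongs to M. -/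
open Matrix Polynomial BigOperators

/-- The distance-`h` matrix of the digraph `Γ(B)`. -/
noncomputable def distMatrix {X : Type*} [Fintype X] [DecidableEq X]
    (B : Matrix X X ℂ) (h : ℕ) : Matrix X X ℂ :=
  Matrix.of fun x y => if bdist B x y = h then 1 else 0

/-!
The Bose–Mesner algebra `M` consists exactly of the matrices that are constant on each relation of
the scheme. As `M` is closed under products, every power of `B ∈ M` is constant on relations, so
the set of `ℓ` with `(B ^ ℓ) x y ≠ 0`, and with it `∂(x, y)`, depends only on the relation
containing `(x, y)`. The distance matrices are then constant on relations too, hence lie in `M`.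
-/

section ZeroOnePartition

variable {ι m n R : Type*}

/-- A family of 0-1 matrices whose supports partition the index set `m × n`, i.e. the adjacency
matrices of the relations of such a partition. Zero matrices, for empty relations, are allowed. -/
structure IsZeroOnePartition [Zero R] [One R] (A : ι → Matrix m n R) : Prop where
  zero_or_one : ∀ i x y, A i x y = 0 ∨ A i x y = 1
  existsUnique_eq_one : ∀ x y, ∃! i, A i x y = 1

theorem existsUnique_eq_one_of_sum_eq_one [Fintype ι] [AddCommMonoidWithOne R] [CharZero R]
    {f : ι → R} (hf : ∀ i, f i = 0 ∨ f i = 1) (hsum : ∑ i, f i = 1) : ∃! i, f i = 1 := by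
  classical
  have f_eq_ite (i : ι) : f i = if f i = 1 then 1 else 0 := by
    rcases hf i with h | h <;> simp [h]
  rw [Finset.sum_congr rfl fun i _ => f_eq_ite i, Finset.sum_boole, Nat.cast_eq_one] at hsum
  simpa [Finset.card_eq_one_iff_existsUnique] using hsum

namespace IsZeroOnePartition

theorem of_sum_eq [Fintype ι] [AddCommMonoidWithOne R] [CharZero R] {A : ι → Matrix m n R}
    (h01 : ∀ i x y, A i x y = 0 ∨ A i x y = 1) (hsum : ∑ i, A i = Matrix.of fun _ _ => 1) :
    IsZeroOnePartition A where
  zero_or_one := h01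
  existsUnique_eq_one x y :=
    existsUnique_eq_one_of_sum_eq_one (fun i => h01 i x y) <| by
      rw [← Matrix.sum_apply, hsum, Matrix.of_apply]

theorem apply_eq_ite [Zero R] [One R] [DecidableEq ι] {A : ι → Matrix m n R}
    (hA : IsZeroOnePartition A) {i : ι} {x : m} {y : n} (hi : A i x y = 1) (k : ι) :
    A k x y = if k = i then 1 else 0 := by
  rcases eq_or_ne k i with rfl | hki
  · rw [hi, if_pos rfl]
  · rw [if_neg hki]
    exact (hA.zero_or_one k x y).resolve_right fun hk =>
      hki ((hA.existsUnique_eq_one x y).unique hk hi)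

variable [Semiring R] {A : ι → Matrix m n R} {C : Matrix m n R}

theorem apply_eq_of_mem_span (hA : IsZeroOnePartition A)
    (hC : C ∈ Submodule.span R (Set.range A)) {i : ι} {x u : m} {y v : n}
    (hxy : A i x y = 1) (huv : A i u v = 1) : C x y = C u v := by
  classical
  induction hC using Submodule.span_induction with
  | mem C hC =>
    obtain ⟨k, rfl⟩ := hC
    rw [hA.apply_eq_ite hxy, hA.apply_eq_ite huv]
  | zero => rfl
  | add C D _ _ hC hD => simp only [Matrix.add_apply, hC, hD]
  | smul a C _ hC => simp only [Matrix.smul_apply, hC]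

theorem mem_span_of_apply_eq [Finite ι] (hA : IsZeroOnePartition A)
    (hC : ∀ i x y u v, A i x y = 1 → A i u v = 1 → C x y = C u v) :
    C ∈ Submodule.span R (Set.range A) := by
  classical
  have := Fintype.ofFinite ι
  have exists_value (i : ι) : ∃ r, ∀ x y, A i x y = 1 → C x y = r := by
    by_cases h : ∃ u v, A i u v = 1
    · obtain ⟨u, v, huv⟩ := h
      exact ⟨C u v, fun x y hxy => hC i x y u v hxy huv⟩
    · exact ⟨0, fun x y hxy => (h ⟨x, y, hxy⟩).elim⟩
  choose value hvalue using exists_value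
  have C_eq_sum : ∑ i, value i • A i = C := by
    ext x y
    obtain ⟨i, hi, -⟩ := hA.existsUnique_eq_one x y
    simp [Matrix.sum_apply, hA.apply_eq_ite hi, hvalue i x y hi]
  exact (Submodule.mem_span_range_iff_exists_fun R).mpr ⟨value, C_eq_sum⟩

end IsZeroOnePartition

end ZeroOnePartition

theorem mul_mem_span_of_forall_mul_mem {R S : Type*} [CommSemiring R] [Semiring S] [Algebra R S]
    {s : Set S} (hs : ∀ a ∈ s, ∀ b ∈ s, a * b ∈ Submodule.span R s) {a b : S}
    (ha : a ∈ Submodule.span R s) (hb : b ∈ Submodule.span R s) :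
    a * b ∈ Submodule.span R s := by
  have span_mul_span_le : Submodule.span R s * Submodule.span R s ≤ Submodule.span R s := by
    rw [Submodule.span_mul_span, Submodule.span_le]
    exact Set.mul_subset_iff.mpr hs
  exact span_mul_span_le (Submodule.mul_mem_mul ha hb)

namespace IsCommAssocScheme

variable {X : Type*} [Fintype X] [DecidableEq X] {d : ℕ} {A : Fin (d + 1) → Matrix X X ℂ}

theorem isZeroOnePartition (hA : IsCommAssocScheme d A) : IsZeroOnePartition A :=
  .of_sum_eq hA.zero_one hA.sum_eq

/-- The Bose–Mesner algebra of a commutative association scheme: the span of its adjacency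
matrices, as a subalgebra of the full matrix algebra. -/
def boseMesnerAlgebra (hA : IsCommAssocScheme d A) : Subalgebra ℂ (Matrix X X ℂ) :=
  (Submodule.span ℂ (Set.range A)).toSubalgebra
    (hA.a_zero ▸ Submodule.subset_span (Set.mem_range_self 0))
    fun _ _ => mul_mem_span_of_forall_mul_mem <|
      Set.forall_mem_range.mpr fun i => Set.forall_mem_range.mpr (hA.mul_mem i)

end IsCommAssocScheme

namespace IsZeroOnePartition

theorem pow_apply_eq {ι X R : Type*} [Fintype X] [DecidableEq X] [CommSemiring R]
    {A : ι → Matrix X X R} (hA : IsZeroOnePartition A) {M : Subalgebra R (Matrix X X R)}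
    (hM : Subalgebra.toSubmodule M = Submodule.span R (Set.range A))
    {B : Matrix X X R} (hB : B ∈ M) {i : ι} {x y u v : X}
    (hxy : A i x y = 1) (huv : A i u v = 1) (l : ℕ) : (B ^ l) x y = (B ^ l) u v :=
  have pow_mem_span : B ^ l ∈ Submodule.span R (Set.range A) := hM ▸ pow_mem hB l
  hA.apply_eq_of_mem_span pow_mem_span hxy huv

variable {ι X : Type*} [Fintype X] [DecidableEq X] {A : ι → Matrix X X ℂ}
  {M : Subalgebra ℂ (Matrix X X ℂ)} {B : Matrix X X ℂ}

theorem bdist_eq (hA : IsZeroOnePartition A)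
    (hM : Subalgebra.toSubmodule M = Submodule.span ℂ (Set.range A)) (hB : B ∈ M)
    {i : ι} {x y u v : X} (hxy : A i x y = 1) (huv : A i u v = 1) :
    bdist B x y = bdist B u v := by
  simp only [bdist, hA.pow_apply_eq hM hB hxy huv]

theorem distMatrix_mem [Finite ι] (hA : IsZeroOnePartition A)
    (hM : Subalgebra.toSubmodule M = Submodule.span ℂ (Set.range A)) (hB : B ∈ M) (h : ℕ) :
    distMatrix B h ∈ M := by
  rw [← Subalgebra.mem_toSubmodule, hM]
  refine hA.mem_span_of_apply_eq fun i x y u v hxy huv => ?_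
  simp only [distMatrix, Matrix.of_apply, hA.bdist_eq hM hB hxy huv]

end IsZeroOnePartition

/-- Where every power of `B` vanishes at `(x, y)`, `bdist B x y` is the junk value `sInf ∅ = 0`, so
such pairs are counted in `distMatrix B 0`. -/
theorem stmt_18_general {ι X : Type*} [Finite ι] [Fintype X] [DecidableEq X]
    {A : ι → Matrix X X ℂ} (hA : IsZeroOnePartition A) {M : Subalgebra ℂ (Matrix X X ℂ)}
    (hM : Subalgebra.toSubmodule M = Submodule.span ℂ (Set.range A))
    {B : Matrix X X ℂ} (hB : B ∈ M) :
    (∀ (i : ι) (x y u v : X), A i x y = 1 → A i u v = 1 → bdist B x y = bdist B u v) ∧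
    (∀ h : ℕ, distMatrix B h ∈ M) :=
  ⟨fun _ _ _ _ _ => hA.bdist_eq hM hB, hA.distMatrix_mem hM hB⟩

/-- If a 0-1 matrix `B` generates the Bose–Mesner algebra `M` of a commutative
`d`-class association scheme, then (i) two pairs related by the same relation
`A i` lie at the same distance in `Γ(B)`, and (ii) every distance-`h` matrix
of `Γ(B)` belongs to `M`. -/
theorem stmt_18 {X : Type*} [Fintype X] [DecidableEq X] [Nonempty X] {d : ℕ}
    (A : Fin (d + 1) → Matrix X X ℂ) (hA : IsCommAssocScheme d A)
    (B : Matrix X X ℂ) (hB : B ∈ Submodule.span ℂ (Set.range A))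
    (h01 : ∀ x y, B x y = 0 ∨ B x y = 1)
    (hgen : ∀ C ∈ Submodule.span ℂ (Set.range A),
      ∃ p : Polynomial ℂ, aeval B p = C) :
    (∀ (i : Fin (d + 1)) (x y u v : X), A i x y = 1 → A i u v = 1 →
        bdist B x y = bdist B u v) ∧
    (∀ h : ℕ, distMatrix B h ∈ Submodule.span ℂ (Set.range A)) :=
  stmt_18_general hA.isZeroOnePartition (M := hA.boseMesnerAlgebra) rfl hB
end
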